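/- arXiv:2210.10188 — 3 statements merged into one kernel-verified Lean document; each statement's English description precedes it below -/
import Mathlib

section
/- Let N be a real number with N > 1, let γ = arcsin(1/√N), let G be the 2×2 real rotation matrix ![![cos 2γ, −sin 2γ], ![sin 2γ, cos 2γ]], let v = ![cos γ, sin γ] and ρ₀ = v vᵀ, and let Π = ![![1,0],![0,0]]. Define the ℝ-linear map L on Matrix (Fin 2) (Fin 2) ℝ by L(ρ) = Π (G ρ Gᵀ) Π. Then id − L is bijective and trace((id − L)⁻¹(Π ρ₀ Π)) = N / 4. -/
open Matrix

/-!
The projection `Π = u uᵀ` has rank one, so `Π A Π = (u ⬝ A u) Π`: after a measurement that does not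
find the target, the walk is always back in the state `Π` up to a scalar. Hence `L` has rank one,
with eigenvalue the probability `(u ⬝ G u)²` of remaining undetected for one more step, and
`(id - L)⁻¹` sums a geometric series on the line spanned by `Π`. For the rotation by `2γ` the series
has ratio `cos² 2γ` and first term `cos² γ`, with sum
`cos² γ / sin² 2γ = 1 / (4 sin² γ) = N / 4`.
-/

section RankOne

variable {R V : Type*} [CommRing R] [AddCommGroup V] [Module R V]

theorem bijective_id_sub_smulRight {f : Module.Dual R V} {x : V} (h : IsUnit (1 - f x)) :
    Function.Bijective (LinearMap.id - f.smulRight x : V →ₗ[R] V) := by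
  have h_neg : IsUnit (1 + (-f) x) := by simpa [← sub_eq_add_neg] using h
  have h_eq : LinearMap.id - f.smulRight x = (LinearEquiv.dilatransvection h_neg).toLinearMap := by
    ext y
    simp [LinearMap.transvection.apply, sub_eq_add_neg]
  rw [h_eq]
  exact (LinearEquiv.dilatransvection h_neg).bijective

theorem one_sub_smul_eq_smul_of_id_sub_smulRight_apply_eq {f : Module.Dual R V} {x y : V} {a : R}
    (h : (LinearMap.id - f.smulRight x : V →ₗ[R] V) y = a • x) :
    (1 - f x) • y = a • x := by
  have hy : y = (a + f y) • x := by
    simpa [sub_eq_iff_eq_add, add_smul] using h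
  have hfy : f y = (a + f y) * f x := by
    simpa using congrArg f hy
  calc (1 - f x) • y = ((1 - f x) * (a + f y)) • x := by rw [mul_smul, ← hy]
    _ = a • x := by congr 1; linear_combination hfy

end RankOne

theorem vecMulVec_mul_mul_vecMulVec {l m n o R : Type*} [Fintype m] [Fintype n] [CommSemiring R]
    (u : l → R) (v : m → R) (A : Matrix m n R) (w : n → R) (x : o → R) :
    vecMulVec u v * A * vecMulVec w x = (v ⬝ᵥ A *ᵥ w) • vecMulVec u x := by
  rw [vecMulVec_mul, vecMulVec_mul_vecMulVec, ← dotProduct_mulVec, vecMulVec_smul]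

section Survival

variable {n R : Type*} [Fintype n]

section CommSemiring

variable [CommSemiring R]

/-- One step `ρ ↦ P (G ρ Gᵀ) P` of the walk `G` on density matrices, followed by a measurement that
projects onto the range of `P`; the result is not renormalised, so that its trace is the probability
of this outcome. -/
def survivalMap (P G : Matrix n n R) : Matrix n n R →ₗ[R] Matrix n n R where
  toFun ρ := P * (G * ρ * Gᵀ) * P
  map_add' := by simp [Matrix.mul_add, Matrix.add_mul]
  map_smul' := by simp

/-- The linear functional `ρ ↦ u ⬝ (G ρ Gᵀ) u`: for a unit vector `u`, the probability of observing
`u` after one step of the walk `G` from the state `ρ`. -/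
def stepProbability (u : n → R) (G : Matrix n n R) : Module.Dual R (Matrix n n R) where
  toFun ρ := u ⬝ᵥ (G * ρ * Gᵀ) *ᵥ u
  map_add' := by simp [Matrix.mul_add, Matrix.add_mul, add_mulVec]
  map_smul' := by simp [smul_mulVec]

theorem survivalMap_vecMulVec_self (u : n → R) (G : Matrix n n R) :
    survivalMap (vecMulVec u u) G = (stepProbability u G).smulRight (vecMulVec u u) :=
  LinearMap.ext fun ρ ↦ vecMulVec_mul_mul_vecMulVec u u (G * ρ * Gᵀ) u u

theorem stepProbability_vecMulVec_self (u v : n → R) (G : Matrix n n R) :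
    stepProbability u G (vecMulVec v v) = (u ⬝ᵥ G *ᵥ v) ^ 2 := by
  change u ⬝ᵥ (G * vecMulVec v v * Gᵀ) *ᵥ u = _
  rw [mul_vecMulVec, vecMulVec_mul, vecMul_transpose, vecMulVec_mulVec, op_smul_eq_smul,
    dotProduct_smul, dotProduct_comm (G *ᵥ v) u, smul_eq_mul, sq]

end CommSemiring

variable [CommRing R]

theorem bijective_id_sub_survivalMap_vecMulVec_self {u : n → R} {G : Matrix n n R}
    (h : IsUnit (1 - (u ⬝ᵥ G *ᵥ u) ^ 2)) :
    Function.Bijective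
      (LinearMap.id - survivalMap (vecMulVec u u) G : Matrix n n R →ₗ[R] Matrix n n R) := by
  rw [← stepProbability_vecMulVec_self] at h
  rw [survivalMap_vecMulVec_self]
  exact bijective_id_sub_smulRight h

theorem one_sub_mul_trace_of_id_sub_survivalMap_apply_eq {u : n → R} {G ρ w : Matrix n n R}
    (hw : (LinearMap.id - survivalMap (vecMulVec u u) G : Matrix n n R →ₗ[R] Matrix n n R) w =
      vecMulVec u u * ρ * vecMulVec u u) :
    (1 - (u ⬝ᵥ G *ᵥ u) ^ 2) * w.trace = (u ⬝ᵥ ρ *ᵥ u) * (u ⬝ᵥ u) := by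
  rw [survivalMap_vecMulVec_self, vecMulVec_mul_mul_vecMulVec] at hw
  have h_smul := one_sub_smul_eq_smul_of_id_sub_smulRight_apply_eq hw
  rw [stepProbability_vecMulVec_self] at h_smul
  simpa [trace_vecMulVec] using congrArg trace h_smul

end Survival

theorem one_sub_cos_two_mul_sq (x : ℝ) :
    1 - Real.cos (2 * x) ^ 2 = 4 * Real.sin x ^ 2 * Real.cos x ^ 2 := by
  rw [← Real.sin_sq, Real.sin_two_mul]
  ring

theorem sin_arcsin_one_div_sqrt_sq {x : ℝ} (hx : 1 ≤ x) :
    Real.sin (Real.arcsin (1 / √x)) ^ 2 = 1 / x := by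
  have h_nonneg : 0 ≤ 1 / √x := by positivity
  have h_le_one : 1 / √x ≤ 1 := div_le_one_of_le₀ (Real.one_le_sqrt.mpr hx) (Real.sqrt_nonneg x)
  rw [Real.sin_arcsin (by linarith) h_le_one, div_pow, one_pow, Real.sq_sqrt (by linarith)]

/-- Theorem 3: Grover's algorithm measured at every step has hitting time `N/4`.
On the invariant 2-dimensional subspace, with `G` the rotation by `2γ`,
`ρ₀ = v vᵀ` the initial state and `Π` the projection onto the non-target direction,
`id - L` is bijective (`L ρ = Π (G ρ Gᵀ) Π`) and `trace ((id - L)⁻¹ (Π ρ₀ Π)) = N / 4`. -/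
theorem grover_hittingTime_measure_every_step
    (N : ℝ) (hN : 1 < N)
    (γ : ℝ) (hγ : γ = Real.arcsin (1 / Real.sqrt N))
    (G : Matrix (Fin 2) (Fin 2) ℝ)
    (hG : G = !![Real.cos (2 * γ), -Real.sin (2 * γ);
                 Real.sin (2 * γ), Real.cos (2 * γ)])
    (v : Fin 2 → ℝ) (hv : v = ![Real.cos γ, Real.sin γ])
    (ρ₀ : Matrix (Fin 2) (Fin 2) ℝ) (hρ₀ : ρ₀ = Matrix.vecMulVec v v)
    (Pj : Matrix (Fin 2) (Fin 2) ℝ) (hPj : Pj = !![1, 0; 0, 0])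
    (L : Matrix (Fin 2) (Fin 2) ℝ →ₗ[ℝ] Matrix (Fin 2) (Fin 2) ℝ)
    (hL : ∀ ρ, L ρ = Pj * (G * ρ * Gᵀ) * Pj) :
    Function.Bijective
        (LinearMap.id - L : Matrix (Fin 2) (Fin 2) ℝ →ₗ[ℝ] Matrix (Fin 2) (Fin 2) ℝ) ∧
      ∀ w : Matrix (Fin 2) (Fin 2) ℝ,
        (LinearMap.id - L : Matrix (Fin 2) (Fin 2) ℝ →ₗ[ℝ] Matrix (Fin 2) (Fin 2) ℝ) w =
            Pj * ρ₀ * Pj →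
          w.trace = N / 4 := by
  have hN_pos : 0 < N := one_pos.trans hN
  have h_sin : Real.sin γ ^ 2 = 1 / N := hγ ▸ sin_arcsin_one_div_sqrt_sq hN.le
  have h_cos : Real.cos γ ≠ 0 := by
    rw [← pow_ne_zero_iff two_ne_zero, Real.cos_sq', h_sin, sub_ne_zero]
    exact ((div_lt_one hN_pos).mpr hN).ne'
  let e : Fin 2 → ℝ := Pi.single 0 1
  obtain rfl : Pj = vecMulVec e e := by
    rw [hPj, ← ext_iff]
    simp [e, vecMulVec_apply, Fin.forall_fin_two]
  obtain rfl : L = survivalMap (vecMulVec e e) G := LinearMap.ext hL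
  have h_amplitude : e ⬝ᵥ G *ᵥ e = Real.cos (2 * γ) := by simp [e, hG]
  have h_initial : e ⬝ᵥ ρ₀ *ᵥ e = Real.cos γ ^ 2 := by simp [e, hρ₀, hv, sq]
  have h_loss : 1 - (e ⬝ᵥ G *ᵥ e) ^ 2 = 4 / N * Real.cos γ ^ 2 := by
    rw [h_amplitude, one_sub_cos_two_mul_sq, h_sin, mul_one_div]
  have h_loss_ne : 1 - (e ⬝ᵥ G *ᵥ e) ^ 2 ≠ 0 := h_loss ▸ by positivity
  refine ⟨bijective_id_sub_survivalMap_vecMulVec_self h_loss_ne.isUnit, fun w hw ↦ ?_⟩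
  calc w.trace = (e ⬝ᵥ ρ₀ *ᵥ e) * (e ⬝ᵥ e) / (1 - (e ⬝ᵥ G *ᵥ e) ^ 2) :=
        eq_div_of_mul_eq h_loss_ne
          (by rw [mul_comm, one_sub_mul_trace_of_id_sub_survivalMap_apply_eq hw])
    _ = Real.cos γ ^ 2 / (4 / N * Real.cos γ ^ 2) := by rw [h_initial, h_loss]; simp [e]
    _ = N / 4 := by field_simp
end

section
/- Define f(N,p) = (N²p² − 16Np + 16N + 16p − 16) / (4Np(2 − p)) for real N and p. Then for every real N ≥ 16 and every p with 0 < p ≤ 1, f(N,p) ≥ √N / 4. -/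
/-!
The numerator of the hitting time is `N² p² + 16 (N - 1) (1 - p)`: over the denominator
`4 N p (2 - p)`, the first term is the `Np` part and the second the `1 / p` part of the scaling.
The coefficient `16 (N - 1)` is at least `2 N` exactly when `8 / 7 ≤ N`, so with `s = √N` it is
enough that `s p (2 - p) ≤ (s p)² + 2 (1 - p)`. The difference of the two sides is
`(s p - 1)² + (1 - p)² + (s - 1) p²`.
-/

section OrderedRing

variable {R : Type*} [CommRing R] [LinearOrder R] [IsStrictOrderedRing R]

theorem mul_mul_two_sub_le_sq_add_two_mul_one_sub {s : R} (hs : 1 ≤ s) (p : R) :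
    s * p * (2 - p) ≤ (s * p) ^ 2 + 2 * (1 - p) := by
  have hgap : 0 ≤ (s * p - 1) ^ 2 + (1 - p) ^ 2 + (s - 1) * p ^ 2 :=
    add_nonneg (by positivity) (mul_nonneg (sub_nonneg.2 hs) (sq_nonneg p))
  linear_combination hgap

theorem mul_sq_add_two_mul_one_sub_le_hittingTime_numerator
    {N p : R} (hN : 8 ≤ 7 * N) (hp : p ≤ 1) :
    N * (N * p ^ 2 + 2 * (1 - p)) ≤
      N ^ 2 * p ^ 2 - 16 * N * p + 16 * N + 16 * p - 16 := by
  have hgap : 0 ≤ (7 * N - 8) * (1 - p) := mul_nonneg (sub_nonneg.2 hN) (sub_nonneg.2 hp)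
  linear_combination 2 * hgap

end OrderedRing

theorem grover_hittingTime_lower_bound_general
    (N p : ℝ) (hN : 8 / 7 ≤ N) (hp0 : 0 < p) (hp1 : p ≤ 1) :
    Real.sqrt N / 4 ≤
      (N ^ 2 * p ^ 2 - 16 * N * p + 16 * N + 16 * p - 16) / (4 * N * p * (2 - p)) := by
  have hN0 : 0 < N := by linarith
  have hs : 1 ≤ √N := Real.one_le_sqrt.2 (by linarith)
  have hden : 0 < 4 * N * p * (2 - p) := mul_pos (by positivity) (by linarith)
  rw [le_div_iff₀ hden]
  calc √N / 4 * (4 * N * p * (2 - p))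
      = N * (√N * p * (2 - p)) := by ring
    _ ≤ N * ((√N * p) ^ 2 + 2 * (1 - p)) := by
        gcongr
        exact mul_mul_two_sub_le_sq_add_two_mul_one_sub hs p
    _ = N * (N * p ^ 2 + 2 * (1 - p)) := by rw [mul_pow, Real.sq_sqrt hN0.le]
    _ ≤ N ^ 2 * p ^ 2 - 16 * N * p + 16 * N + 16 * p - 16 :=
        mul_sq_add_two_mul_one_sub_le_hittingTime_numerator (by linarith) hp1

/-- The generalized Grover hitting time `f(N,p)` is at least `√N / 4` for all
`N ≥ 16` and `0 < p ≤ 1`: no measurement probability beats the `√N` scaling. -/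
theorem grover_hittingTime_lower_bound
    (N p : ℝ) (hN : 16 ≤ N) (hp0 : 0 < p) (hp1 : p ≤ 1) :
    Real.sqrt N / 4 ≤
      (N ^ 2 * p ^ 2 - 16 * N * p + 16 * N + 16 * p - 16) / (4 * N * p * (2 - p)) :=
  grover_hittingTime_lower_bound_general N p (by linarith) hp0 hp1
end

section
/- Define f(N,p) = (N²p² − 16Np + 16N + 16p − 16) / (4Np(2 − p)) for real N and p. Then for every real N ≥ 16, taking p = 4/√N (which satisfies 0 < p ≤ 1), one has f(N, 4/√N) ≤ 2√N. -/
/-!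
Since `-16Np + 16N + 16p - 16 = 16(N - 1)(1 - p)`, the numerator of `f(N, p)` is
`(Np)² + 16(N - 1)(1 - p)`. Divided by `4Np(2 - p)`, the first term is at most `Np/4` and the
second at most `2/p`. At `p = c/√N` both bounds are multiples of `√N`, with total coefficient
`c/4 + 2/c`, which is `3/2` for `c = 4`.
-/

/-- The generalized hitting time `f(N, p)` of Grover's algorithm on `N` items when the halting
measurement is attempted at each step with probability `p`. It is extended to real `N`, and has
the junk value `0` where the denominator vanishes (`N = 0`, `p = 0` or `p = 2`). -/
noncomputable def groverHittingTime (N p : ℝ) : ℝ :=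
  (N ^ 2 * p ^ 2 - 16 * N * p + 16 * N + 16 * p - 16) / (4 * N * p * (2 - p))

theorem groverHittingTime_eq_add (N p : ℝ) :
    groverHittingTime N p =
      N * p / (4 * (2 - p)) + 4 * (N - 1) * (1 - p) / (N * p * (2 - p)) := by
  have numerator_eq : N ^ 2 * p ^ 2 - 16 * N * p + 16 * N + 16 * p - 16 =
      N ^ 2 * p ^ 2 + 16 * (N - 1) * (1 - p) := by ring
  rw [groverHittingTime, numerator_eq]
  field_simp
  ring

theorem groverHittingTime_le_add {N p : ℝ} (hN : 0 < N) (hp : 0 < p) (hp1 : p ≤ 1) :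
    groverHittingTime N p ≤ N * p / 4 + 2 / p := by
  have h2p : 0 < 2 - p := by linarith
  rw [groverHittingTime_eq_add]
  gcongr ?_ + ?_
  · exact div_le_div_of_nonneg_left (by positivity) (by norm_num) (by linarith)
  · rw [div_le_div_iff₀ (by positivity) hp]
    have slack_nonneg : 0 ≤ 2 * (N * p) + 4 * (1 - p) := by
      have := mul_pos hN hp
      linarith
    calc 4 * (N - 1) * (1 - p) * p
        = (2 * N * (2 - p) - (2 * (N * p) + 4 * (1 - p))) * p := by ring
      _ ≤ 2 * N * (2 - p) * p := by gcongr; exact sub_le_self _ slack_nonneg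
      _ = 2 * (N * p * (2 - p)) := by ring

theorem groverHittingTime_div_sqrt_le {N c : ℝ} (hc : 0 < c) (hcN : c ≤ √N) :
    groverHittingTime N (c / √N) ≤ (c / 4 + 2 / c) * √N := by
  have hsqrt : 0 < √N := hc.trans_le hcN
  have hN : 0 < N := Real.sqrt_pos.mp hsqrt
  calc groverHittingTime N (c / √N)
      ≤ N * (c / √N) / 4 + 2 / (c / √N) :=
        groverHittingTime_le_add hN (div_pos hc hsqrt) ((div_le_one hsqrt).mpr hcN)
    _ = c / 4 * (N / √N) + 2 / c * √N := by field_simp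
    _ = (c / 4 + 2 / c) * √N := by rw [Real.div_sqrt, add_mul]

/-- Choosing `p = 4/√N` (a valid probability for `N ≥ 16`) makes the generalized
Grover hitting time `f(N,p)` at most `2√N`, recovering the optimal `O(√N)` behaviour. -/
theorem grover_hittingTime_upper_bound
    (N : ℝ) (hN : 16 ≤ N) :
    0 < 4 / Real.sqrt N ∧ 4 / Real.sqrt N ≤ 1 ∧
      (N ^ 2 * (4 / Real.sqrt N) ^ 2 - 16 * N * (4 / Real.sqrt N) + 16 * N +
          16 * (4 / Real.sqrt N) - 16) /
          (4 * N * (4 / Real.sqrt N) * (2 - 4 / Real.sqrt N)) ≤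
        2 * Real.sqrt N := by
  have four_le_sqrt : 4 ≤ √N := Real.le_sqrt_of_sq_le (by linarith)
  have sqrt_pos : 0 < √N := by linarith
  refine ⟨by positivity, (div_le_one sqrt_pos).mpr four_le_sqrt, ?_⟩
  calc groverHittingTime N (4 / √N)
      ≤ (4 / 4 + 2 / 4) * √N := groverHittingTime_div_sqrt_le (by norm_num) four_le_sqrt
    _ ≤ 2 * √N := by gcongr; norm_num
end
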